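/- Let λ be a partition and λ' its conjugate partition. Then for every natural number j with 2j ≤ |λ|, the coefficients of the Wronskian Hermite polynomials satisfy coeff_{|λ|−2j}(He_λ) = (−1)^j · coeff_{|λ|−2j}(He_{λ'}). (Equivalently, the remainder polynomials satisfy R_λ(x) = (−1)^{d} R_{λ'}(−x), where d is the common degree of the remainder polynomials; in particular if λ is self-conjugate then R_λ is an even polynomial.) -/

import Mathlib

/-- A partition: a weakly decreasing list of positive integers. -/
def IsPartition (l : List ℕ) : Prop :=
  l.Pairwise (· ≥ ·) ∧ ∀ x ∈ l, 0 < x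

/-- The degree vector of a partition: `n_i = λ_i + ℓ(λ) − i` (here `i` is 0-indexed). -/
def degVec (l : List ℕ) (i : Fin l.length) : ℕ :=
  l.get i + (l.length - 1 - (i : ℕ))

/-- The Vandermonde determinant `Δ(n_λ) = ∏_{i<j} (n_j − n_i)` of the degree vector. -/
noncomputable def vanderQ (l : List ℕ) : ℚ :=
  ∏ i : Fin l.length, ∏ j : Fin l.length,
    if (i : ℕ) < (j : ℕ) then ((degVec l j : ℚ) - (degVec l i : ℚ)) else 1

/-- The Wronskian Hermite polynomial `He_λ = Wr[He_{n_1},…,He_{n_ℓ}] / Δ(n_λ)`. -/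
noncomputable def HeW (l : List ℕ) : Polynomial ℚ :=
  Polynomial.C (vanderQ l)⁻¹ *
    (Matrix.of fun i j : Fin l.length =>
      (⇑Polynomial.derivative)^[(i : ℕ)]
        ((Polynomial.hermite (degVec l j)).map (Int.castRingHom ℚ))).det

/-- The conjugate partition entry `λ'_j = #{i : λ_i ≥ j}`. -/
def conjPart (l : List ℕ) (j : ℕ) : ℕ :=
  (l.filter fun a => decide (j ≤ a)).length

/-- The conjugate partition, as a list `(λ'_1, λ'_2, …, λ'_{λ_1})`. -/
def conjugate (l : List ℕ) : List ℕ :=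
  (List.range l.headI).map fun j => conjPart l (j + 1)

/-!
The idea is to embed the Hermite polynomials in the family `H_n^{(v)}` of Hermite polynomials of
variance `v`, with generating function `∑ H_n^{(v)} t^n / n! = exp (X t - v t² / 2) =: S_v(t)`, and
to show that the corresponding Wronskian polynomials satisfy `He_λ^{(v)} = He_{λ'}^{(-v)}`.

As `d/dX` acts on `S_v` as multiplication by `t`, the Wronskian is, up to a nonzero constant, a
determinant of Jacobi–Trudi type in the coefficients of `S_v`, that is, a minor of a unitriangular
Toeplitz matrix. The inverse matrix is the Toeplitz matrix of `S_v(t)⁻¹ = S_{-v}(-t)`, and Jacobi's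
theorem on complementary minors expresses the minor for `λ` and `S_v` through the minor for `λ'`
and `S_{-v}`. The constants are compared at `v = 0`, where `He_λ^{(0)} = X^{|λ|}`. Finally,
replacing `X` by `i X` turns variance `v` into variance `-v`, which produces the sign `(-1)^j`.
-/

section ComplementaryMinors

variable {R : Type*} [CommRing R]

lemma det_toBlocks₁₁_of_mul_eq_one {m n : Type*} [Fintype m] [DecidableEq m] [Fintype n]
    [DecidableEq n] {A B : Matrix (m ⊕ n) (m ⊕ n) R} (hAB : A * B = 1) :
    A.toBlocks₁₁.det = A.det * B.toBlocks₂₂.det := by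
  have hblocks := hAB
  rw [← A.fromBlocks_toBlocks, ← B.fromBlocks_toBlocks, Matrix.fromBlocks_multiply,
    ← Matrix.fromBlocks_one, Matrix.fromBlocks_inj] at hblocks
  obtain ⟨-, h₁₂, -, h₂₂⟩ := hblocks
  have hmul : A * Matrix.fromBlocks 1 B.toBlocks₁₂ 0 B.toBlocks₂₂ =
      Matrix.fromBlocks A.toBlocks₁₁ 0 A.toBlocks₂₁ 1 := by
    conv_lhs => rw [← A.fromBlocks_toBlocks]
    simp [Matrix.fromBlocks_multiply, h₁₂, h₂₂]
  simpa using (congrArg Matrix.det hmul).symm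

/-- The `N × N` upper triangular Toeplitz matrix of a power series `P`, with entry `P_{c - r}` in
row `r` and column `c`; this is the `c`-th coefficient of `X ^ r * P`, which vanishes for
`c < r`. -/
noncomputable def toeplitz (N : ℕ) (P : PowerSeries R) : Matrix (Fin N) (Fin N) R :=
  Matrix.of fun r c => PowerSeries.coeff (c : ℕ) (PowerSeries.X ^ (r : ℕ) * P)

lemma toeplitz_apply (N : ℕ) (P : PowerSeries R) (r c : Fin N) :
    toeplitz N P r c = PowerSeries.coeff (c : ℕ) (PowerSeries.X ^ (r : ℕ) * P) :=
  rfl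

lemma toeplitz_rev_rev (N : ℕ) (P : PowerSeries R) (r c : Fin N) :
    toeplitz N P r.rev c.rev = toeplitz N P c r := by
  simp only [toeplitz_apply, PowerSeries.coeff_X_pow_mul', Fin.val_rev]
  split_ifs
  · congr 2; omega
  · omega
  · omega
  · rfl

lemma toeplitz_one (N : ℕ) : toeplitz N (1 : PowerSeries R) = 1 := by
  ext r c
  simp [toeplitz_apply, PowerSeries.coeff_X_pow, Matrix.one_apply, Fin.ext_iff, eq_comm]

lemma toeplitz_mul (N : ℕ) (P Q : PowerSeries R) :
    toeplitz N (P * Q) = toeplitz N P * toeplitz N Q := by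
  ext r c
  set F := PowerSeries.X ^ (r : ℕ) * P
  calc toeplitz N (P * Q) r c
      = ∑ k ∈ Finset.range (c + 1), PowerSeries.coeff k F * PowerSeries.coeff (c - k) Q := by
        rw [toeplitz_apply, ← mul_assoc, PowerSeries.coeff_mul,
          Finset.Nat.sum_antidiagonal_eq_sum_range_succ
            fun i j => PowerSeries.coeff i F * PowerSeries.coeff j Q]
    _ = ∑ k ∈ Finset.range N,
          PowerSeries.coeff k F * PowerSeries.coeff (c : ℕ) (PowerSeries.X ^ k * Q) := by
        refine Finset.sum_subset_zero_on_sdiff (Finset.range_mono c.2) (fun k hk => ?_)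
          fun k hk => ?_
        · rw [PowerSeries.coeff_X_pow_mul' Q, if_neg (by grind), mul_zero]
        · rw [PowerSeries.coeff_X_pow_mul' Q, if_pos (by grind)]
    _ = (toeplitz N P * toeplitz N Q) r c := by
        rw [Matrix.mul_apply, ← Fin.sum_univ_eq_sum_range]
        rfl

lemma det_toeplitz (N : ℕ) (P : PowerSeries R) :
    (toeplitz N P).det = PowerSeries.constantCoeff P ^ N := by
  rw [Matrix.det_of_isUpperTriangular]
  · simp [toeplitz_apply, PowerSeries.coeff_X_pow_mul']
  · intro r c hcr
    rw [toeplitz_apply, PowerSeries.coeff_X_pow_mul', if_neg (show ¬(r : ℕ) ≤ c from not_le.2 hcr)]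

end ComplementaryMinors

section Partitions

variable {l : List ℕ}

lemma degVec_strictAnti (hl : l.Pairwise (· ≥ ·)) : StrictAnti (degVec l) := by
  intro i j hij
  have hle : l.get j ≤ l.get i := List.pairwise_iff_get.1 hl i j hij
  unfold degVec
  omega

lemma degVec_lt_add {m : ℕ} (hm : ∀ a ∈ l, a ≤ m) (i : Fin l.length) :
    degVec l i < l.length + m := by
  have := hm _ (l.get_mem i)
  unfold degVec
  omega

lemma sum_degVec (l : List ℕ) : ∑ i, degVec l i = l.sum + ∑ i : Fin l.length, (i : ℕ) := by
  have hrev : ∑ i : Fin l.length, (l.length - 1 - (i : ℕ)) = ∑ i : Fin l.length, (i : ℕ) := by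
    rw [← Equiv.sum_comp Fin.revPerm]
    exact Finset.sum_congr rfl fun i _ => by simp only [Fin.revPerm_apply, Fin.val_rev]; omega
  have hparts : ∑ i, l.get i = l.sum := Fin.sum_univ_getElem l
  simp only [degVec, Finset.sum_add_distrib, hrev, hparts]

lemma conjPart_le_length (l : List ℕ) (a : ℕ) : conjPart l a ≤ l.length :=
  List.length_filter_le _ _

lemma antitone_conjPart (l : List ℕ) : Antitone (conjPart l) := fun a b hab =>
  (List.monotone_filter_right l fun x => by simpa using hab.trans).length_le

lemma lt_conjPart_iff (hl : l.Pairwise (· ≥ ·)) (i : Fin l.length) (a : ℕ) :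
    (i : ℕ) < conjPart l a ↔ a ≤ l.get i := by
  induction l with
  | nil => exact i.elim0
  | cons x t ih =>
    obtain ⟨hx, ht⟩ := List.pairwise_cons.1 hl
    by_cases hax : a ≤ x
    · have hcons : conjPart (x :: t) a = conjPart t a + 1 := by simp [conjPart, hax]
      refine Fin.cases (by simp [hcons, hax]) (fun i => ?_) i
      simpa [hcons] using ih ht i
    · have hle : ∀ b ∈ x :: t, b < a := by grind
      have hzero : conjPart (x :: t) a = 0 := by simpa [conjPart] using hle
      simpa [hzero] using hle _ (List.get_mem _ i)

lemma le_headI_of_mem (hl : l.Pairwise (· ≥ ·)) : ∀ a ∈ l, a ≤ l.headI := by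
  cases l with
  | nil => simp
  | cons x t => simpa using (List.pairwise_cons.1 hl).1

lemma length_conjugate (l : List ℕ) : (conjugate l).length = l.headI := by
  simp [conjugate]

lemma get_conjugate (l : List ℕ) (i : Fin (conjugate l).length) :
    (conjugate l).get i = conjPart l (i + 1) := by
  rw [List.get_eq_getElem]
  simp only [conjugate, List.getElem_map, List.getElem_range]

lemma pairwise_conjugate (l : List ℕ) : (conjugate l).Pairwise (· ≥ ·) :=
  List.pairwise_map.2 <| List.pairwise_lt_range.imp fun hab =>
    antitone_conjPart l (Nat.succ_le_succ hab.le)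

lemma le_length_of_mem_conjugate (l : List ℕ) : ∀ a ∈ conjugate l, a ≤ l.length := by
  simpa [conjugate] using fun a _ => conjPart_le_length l (a + 1)

lemma degVec_add_degVec_conjugate_ne (hl : l.Pairwise (· ≥ ·)) (i : Fin l.length)
    (j : Fin (conjugate l).length) :
    degVec l i + degVec (conjugate l) j + 1 ≠ l.length + (conjugate l).length := by
  have := lt_conjPart_iff hl i (j + 1)
  have := get_conjugate l j
  unfold degVec
  omega

lemma exists_equiv_degVec (hl : l.Pairwise (· ≥ ·)) :
    ∃ e : Fin l.length ⊕ Fin (conjugate l).length ≃ Fin (l.length + (conjugate l).length),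
      (∀ i, (e (Sum.inl i) : ℕ) = degVec l i) ∧
      ∀ j, ((e (Sum.inr j)).rev : ℕ) = degVec (conjugate l) j := by
  have hdeg : ∀ i, degVec l i < l.length + (conjugate l).length :=
    degVec_lt_add (by simpa only [length_conjugate] using le_headI_of_mem hl)
  have hdeg' : ∀ j, degVec (conjugate l) j < l.length + (conjugate l).length := fun j =>
    (degVec_lt_add (le_length_of_mem_conjugate l) j).trans_eq (add_comm _ _)
  let f := Sum.elim (fun i => (⟨degVec l i, hdeg i⟩ : Fin (l.length + (conjugate l).length)))
    fun j => Fin.rev ⟨degVec (conjugate l) j, hdeg' j⟩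
  have hf : Function.Injective f := by
    refine Function.Injective.sumElim (fun i j hij => ?_) (fun i j hij => ?_) fun i j hij => ?_
    · exact (degVec_strictAnti hl).injective (Fin.mk.inj hij)
    · exact (degVec_strictAnti (pairwise_conjugate l)).injective
        (Fin.mk.inj (Fin.rev_injective hij))
    · have := degVec_add_degVec_conjugate_ne hl i j
      have := hdeg' j
      simp only [Fin.ext_iff, Fin.val_rev] at hij
      omega
  have hbij : Function.Bijective f :=
    (Fintype.bijective_iff_injective_and_card f).2 ⟨hf, by simp⟩
  exact ⟨Equiv.ofBijective f hbij, by simp [f], by simp [f]⟩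

end Partitions

section JacobiTrudi

variable {R : Type*} [CommRing R]

/-- The Jacobi–Trudi determinant `det (P_{n_j - i})` of a list `l` with degree vector `n` at a
power series `P`. If `P` is the generating function of the complete homogeneous symmetric
functions, it is the Schur function of `l` up to sign. Rows are indexed from `0`, and the `i`-th
row is read off `X ^ i * P`, so that coefficients of negative index vanish. -/
noncomputable def jacobiTrudi (l : List ℕ) (P : PowerSeries R) : R :=
  (Matrix.of fun i j : Fin l.length =>
    PowerSeries.coeff (degVec l j) (PowerSeries.X ^ (i : ℕ) * P)).det

lemma jacobiTrudi_map {S : Type*} [CommRing S] (f : R →+* S) (l : List ℕ) (P : PowerSeries R) :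
    jacobiTrudi l (P.map f) = f (jacobiTrudi l P) := by
  rw [jacobiTrudi, jacobiTrudi, RingHom.map_det]
  congr 1
  ext i j
  rw [RingHom.mapMatrix_apply, Matrix.map_apply, Matrix.of_apply, Matrix.of_apply,
    ← PowerSeries.coeff_map, map_mul (PowerSeries.map f), map_pow (PowerSeries.map f),
    PowerSeries.map_X]

lemma jacobiTrudi_rescale {c : R} (hc : IsLeftRegular c) (l : List ℕ) (P : PowerSeries R) :
    jacobiTrudi l (PowerSeries.rescale c P) = c ^ l.sum * jacobiTrudi l P := by
  have hentry (i n : ℕ) : c ^ i * PowerSeries.coeff n (PowerSeries.X ^ i *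
      PowerSeries.rescale c P) = c ^ n * PowerSeries.coeff n (PowerSeries.X ^ i * P) := by
    rw [← PowerSeries.coeff_rescale, map_mul (PowerSeries.rescale c),
      map_pow (PowerSeries.rescale c), PowerSeries.rescale_X, mul_pow, ← map_pow, mul_assoc,
      PowerSeries.coeff_C_mul]
  have hrows := Matrix.det_mul_column (fun i : Fin l.length => c ^ (i : ℕ))
    (Matrix.of fun i j : Fin l.length => PowerSeries.coeff (degVec l j)
      (PowerSeries.X ^ (i : ℕ) * PowerSeries.rescale c P))
  simp only [Matrix.of_apply, hentry] at hrows
  have hcols := Matrix.det_mul_row (fun j => c ^ degVec l j)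
    (Matrix.of fun i j : Fin l.length => PowerSeries.coeff (degVec l j)
      (PowerSeries.X ^ (i : ℕ) * P))
  simp only [Matrix.of_apply] at hcols
  rw [hcols, Finset.prod_pow_eq_pow_sum, Finset.prod_pow_eq_pow_sum, sum_degVec, add_comm,
    pow_add, mul_assoc] at hrows
  exact (hc.pow _ hrows).symm

lemma exists_jacobiTrudi_eq_jacobiTrudi_conjugate {l : List ℕ} (hl : l.Pairwise (· ≥ ·)) :
    ∃ s : ℤ, ∀ P Q : PowerSeries R, P * Q = 1 → PowerSeries.constantCoeff P = 1 →
      jacobiTrudi l P = s * jacobiTrudi (conjugate l) Q := by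
  obtain ⟨τ, hτl, hτr⟩ := exists_equiv_degVec hl
  let σ := (Equiv.sumCongr (Equiv.refl (Fin l.length))
    (Fin.revPerm (n := (conjugate l).length))).trans finSumFinEquiv
  have hσl (i) : (σ (Sum.inl i) : ℕ) = i := by simp [σ]
  have hσr (j) : ((σ (Sum.inr j)).rev : ℕ) = j := by simp [σ, Fin.val_rev]; omega
  refine ⟨Equiv.Perm.sign (σ.symm.trans τ), fun P Q hPQ hP => ?_⟩
  set A := (toeplitz _ P).submatrix σ τ with hA
  set B := (toeplitz _ Q).submatrix τ σ with hB
  have hAB : A * B = 1 := by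
    rw [hA, hB, Matrix.submatrix_mul_equiv, ← toeplitz_mul, hPQ, toeplitz_one,
      Matrix.submatrix_one_equiv]
  have hdet : A.det = ((Equiv.Perm.sign (σ.symm.trans τ) : ℤ) : R) := by
    have hperm : A = ((toeplitz _ P).submatrix id (σ.symm.trans τ)).submatrix σ σ := by
      ext i j; simp [hA]
    rw [hperm, Matrix.det_submatrix_equiv_self, Matrix.det_permute', det_toeplitz, hP, one_pow,
      mul_one]
  have hA₁₁ : A.toBlocks₁₁.det = jacobiTrudi l P := by
    congr 1
    ext i j
    simp [hA, Matrix.toBlocks₁₁, toeplitz_apply, hσl, hτl]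
  have hB₂₂ : B.toBlocks₂₂.det = jacobiTrudi (conjugate l) Q := by
    rw [← Matrix.det_transpose]
    congr 1
    ext i j
    rw [Matrix.transpose_apply, Matrix.toBlocks₂₂, Matrix.of_apply, hB, Matrix.submatrix_apply,
      ← toeplitz_rev_rev, toeplitz_apply, hτr, hσr, Matrix.of_apply]
  rw [← hA₁₁, ← hB₂₂, ← hdet, det_toBlocks₁₁_of_mul_eq_one hAB]

end JacobiTrudi

open Polynomial

section PowerSeriesDerivative

variable {R : Type*} [CommRing R]

lemma derivative_rescale (c : R) (P : PowerSeries R) :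
    PowerSeries.derivative R (PowerSeries.rescale c P) =
      PowerSeries.C c * PowerSeries.rescale c (PowerSeries.derivative R P) := by
  ext n
  simp only [PowerSeries.coeff_derivative, PowerSeries.coeff_rescale, PowerSeries.coeff_C_mul]
  ring

lemma mul_eq_one_of_derivative_eq [IsAddTorsionFree R] {P Q F : PowerSeries R}
    (hP : PowerSeries.derivative R P = F * P) (hQ : PowerSeries.derivative R Q = -F * Q)
    (hP₀ : PowerSeries.constantCoeff P = 1) (hQ₀ : PowerSeries.constantCoeff Q = 1) :
    P * Q = 1 := by
  apply PowerSeries.derivative.ext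
  · rw [Derivation.leibniz, hP, hQ, PowerSeries.derivative_one, smul_eq_mul, smul_eq_mul]
    ring
  · rw [map_mul, hP₀, hQ₀, mul_one, map_one]

end PowerSeriesDerivative

section HermiteVar

variable {R : Type*} [CommRing R]

/-- The monic Hermite polynomials `H_n^{(v)}` of variance `v`, the Appell sequence with generating
function `exp (X t - v t² / 2)`. Variance `1` gives `Polynomial.hermite`, variance `0` the powers
of `X`. -/
noncomputable def hermiteVar (v : R) : ℕ → R[X]
  | 0 => 1
  | n + 1 => X * hermiteVar v n - C v * derivative (hermiteVar v n)

lemma hermiteVar_zero_variance (n : ℕ) : hermiteVar (0 : R) n = X ^ n := by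
  induction n with
  | zero => rfl
  | succ n ih => simp [hermiteVar, ih, pow_succ']

lemma hermiteVar_one_variance (n : ℕ) :
    hermiteVar (1 : R) n = (hermite n).map (Int.castRingHom R) := by
  induction n with
  | zero => simp [hermiteVar]
  | succ n ih => simp [hermiteVar, ih, derivative_map]

lemma map_hermiteVar {S : Type*} [CommRing S] (f : R →+* S) (v : R) (n : ℕ) :
    (hermiteVar v n).map f = hermiteVar (f v) n := by
  induction n with
  | zero => simp [hermiteVar]
  | succ n ih => simp [hermiteVar, ← derivative_map, ih]

lemma derivative_hermiteVar_succ (v : R) (n : ℕ) :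
    derivative (hermiteVar v (n + 1)) = (n + 1) * hermiteVar v n := by
  induction n with
  | zero => simp [hermiteVar]
  | succ n ih =>
    have hrec : hermiteVar v (n + 1) = X * hermiteVar v n - C v * derivative (hermiteVar v n) := rfl
    have hcast : derivative ((n : R[X]) + 1) = 0 := by simp
    rw [hermiteVar, derivative_sub, derivative_mul, derivative_X, derivative_C_mul, ih,
      derivative_mul, hcast]
    push_cast
    linear_combination -((n : R[X]) + 1) * hrec

lemma hermiteVar_comp_C_mul_X (c v : R) (n : ℕ) :
    (hermiteVar (c ^ 2 * v) n).comp (C c * X) = C (c ^ n) * hermiteVar v n := by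
  induction n with
  | zero => simp [hermiteVar]
  | succ n ih =>
    have hderiv := congrArg derivative ih
    rw [derivative_comp, derivative_C_mul, derivative_C_mul, derivative_X, mul_one] at hderiv
    rw [hermiteVar, sub_comp, mul_comp, mul_comp, X_comp, C_comp, ih, hermiteVar]
    simp only [C_mul, C_pow] at hderiv ⊢
    linear_combination -(C c * C v) * hderiv

variable {K : Type*} [Field K]

/-- The generating function `S_v = ∑ H_n^{(v)} t ^ n / n! = exp (X t - v t² / 2)` of the Hermite
polynomials of variance `v`, as a power series in `t` over `K[X]`. -/
noncomputable def hermiteSeries (v : K) : PowerSeries K[X] :=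
  PowerSeries.mk fun n => C (n.factorial : K)⁻¹ * hermiteVar v n

lemma constantCoeff_hermiteSeries (v : K) :
    PowerSeries.constantCoeff (hermiteSeries v) = 1 := by
  simp [hermiteSeries, hermiteVar]

lemma map_compRingHom_hermiteSeries (c v : K) :
    (hermiteSeries (c ^ 2 * v)).map (compRingHom (C c * X)) =
      PowerSeries.rescale (C c) (hermiteSeries v) := by
  ext1 n
  rw [PowerSeries.coeff_map, PowerSeries.coeff_rescale, hermiteSeries, hermiteSeries,
    PowerSeries.coeff_mk, PowerSeries.coeff_mk, coe_compRingHom_apply, mul_comp, C_comp,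
    hermiteVar_comp_C_mul_X, C_pow, mul_left_comm]

variable [CharZero K]

lemma hermiteVar_eq_factorial_mul_coeff (v : K) (n : ℕ) :
    hermiteVar v n = C (n.factorial : K) * PowerSeries.coeff n (hermiteSeries v) := by
  have hn : (n.factorial : K) ≠ 0 := Nat.cast_ne_zero.2 n.factorial_ne_zero
  rw [hermiteSeries, PowerSeries.coeff_mk, ← mul_assoc, ← C_mul, mul_inv_cancel₀ hn, C_1, one_mul]

lemma succ_mul_inv_factorial_succ (n : ℕ) :
    ((n : K) + 1) * ((n + 1).factorial : K)⁻¹ = (n.factorial : K)⁻¹ := by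
  have hn : (n : K) + 1 ≠ 0 := n.cast_add_one_ne_zero
  rw [Nat.factorial_succ, Nat.cast_mul, Nat.cast_succ, mul_inv, mul_inv_cancel_left₀ hn]

lemma derivative_coeff_hermiteSeries (v : K) (n : ℕ) :
    derivative (PowerSeries.coeff n (hermiteSeries v)) =
      PowerSeries.coeff n (PowerSeries.X * hermiteSeries v) := by
  cases n with
  | zero => simp [hermiteSeries, hermiteVar]
  | succ n =>
    rw [PowerSeries.coeff_succ_X_mul, hermiteSeries, PowerSeries.coeff_mk, PowerSeries.coeff_mk,
      derivative_C_mul, derivative_hermiteVar_succ, ← succ_mul_inv_factorial_succ n]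
    simp only [map_mul, map_add, map_natCast, map_one]
    ring

lemma iterate_derivative_coeff_hermiteSeries (v : K) (i n : ℕ) :
    derivative^[i] (PowerSeries.coeff n (hermiteSeries v)) =
      PowerSeries.coeff n (PowerSeries.X ^ i * hermiteSeries v) := by
  induction i generalizing n with
  | zero => simp
  | succ i ih =>
    rw [Function.iterate_succ_apply, derivative_coeff_hermiteSeries, pow_succ', mul_assoc]
    cases n with
    | zero => simp
    | succ n => rw [PowerSeries.coeff_succ_X_mul, PowerSeries.coeff_succ_X_mul, ih]

lemma derivative_hermiteSeries (v : K) :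
    PowerSeries.derivative K[X] (hermiteSeries v) =
      (PowerSeries.C X - PowerSeries.C (C v) * PowerSeries.X) * hermiteSeries v := by
  ext1 n
  have hderiv := derivative_coeff_hermiteSeries v n
  rw [PowerSeries.coeff_derivative, sub_mul, map_sub, mul_assoc, PowerSeries.coeff_C_mul,
    PowerSeries.coeff_C_mul, ← hderiv, hermiteSeries, PowerSeries.coeff_mk, PowerSeries.coeff_mk,
    derivative_C_mul, hermiteVar, ← succ_mul_inv_factorial_succ n]
  simp only [map_mul, map_add, map_natCast, map_one]
  ring

lemma hermiteSeries_mul_rescale_neg_one (v : K) :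
    hermiteSeries v * PowerSeries.rescale (-1) (hermiteSeries (-v)) = 1 := by
  refine mul_eq_one_of_derivative_eq (derivative_hermiteSeries v) ?_
    (constantCoeff_hermiteSeries v) ?_
  · have hconst (p : K[X]) : PowerSeries.rescale (-1) (PowerSeries.C p) = PowerSeries.C p := by
      ext (_ | n) <;> simp [PowerSeries.coeff_C]
    rw [derivative_rescale, derivative_hermiteSeries]
    simp only [map_mul, map_sub, map_neg, map_one, hconst, PowerSeries.rescale_X]
    ring
  · rw [← PowerSeries.coeff_zero_eq_constantCoeff_apply, PowerSeries.coeff_rescale, pow_zero,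
      one_mul, PowerSeries.coeff_zero_eq_constantCoeff_apply, constantCoeff_hermiteSeries]

end HermiteVar

section WronskianHermiteVar

variable {K : Type*} [Field K]

/-- The Wronskian Hermite polynomial `He_λ^{(v)}` of variance `v`, obtained from `HeW` by replacing
the Hermite polynomials by those of variance `v`. -/
noncomputable def HeWVar (v : K) (l : List ℕ) : K[X] :=
  C (vanderQ l : K)⁻¹ *
    (Matrix.of fun i j : Fin l.length => derivative^[(i : ℕ)] (hermiteVar v (degVec l j))).det

lemma HeWVar_one (l : List ℕ) : HeWVar (1 : ℚ) l = HeW l := by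
  simp only [HeWVar, HeW, hermiteVar_one_variance, Rat.cast_id]

lemma map_HeWVar {L : Type*} [Field L] (f : K →+* L) (v : K) (l : List ℕ) :
    (HeWVar v l).map f = HeWVar (f v) l := by
  rw [HeWVar, HeWVar, Polynomial.map_mul, map_C, map_inv₀, map_ratCast, ← coe_mapRingHom,
    RingHom.map_det]
  congr 2
  ext1 i j
  simp only [RingHom.mapMatrix_apply, Matrix.map_apply, Matrix.of_apply, coe_mapRingHom,
    ← iterate_derivative_map, map_hermiteVar]

variable [CharZero K]

lemma cast_vanderQ (l : List ℕ) :
    (vanderQ l : K) = (Matrix.vandermonde fun i => (degVec l i : K)).det := by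
  rw [Matrix.det_vandermonde, vanderQ, Rat.cast_prod]
  refine Finset.prod_congr rfl fun i _ => ?_
  have hIoi : Finset.Ioi i = Finset.univ.filter fun j : Fin l.length => (i : ℕ) < j := by ext; simp
  rw [hIoi, Finset.prod_filter, Rat.cast_prod]
  exact Finset.prod_congr rfl fun j _ => by split_ifs <;> simp

lemma cast_vanderQ_ne_zero {l : List ℕ} (hl : l.Pairwise (· ≥ ·)) : (vanderQ l : K) ≠ 0 := by
  rw [cast_vanderQ, Matrix.det_vandermonde_ne_zero_iff]
  exact Nat.cast_injective.comp (degVec_strictAnti hl).injective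

lemma det_descFactorial_degVec (l : List ℕ) :
    (Matrix.of fun i j : Fin l.length => ((degVec l j).descFactorial i : K)).det = vanderQ l := by
  rw [cast_vanderQ, ← Matrix.det_transpose, Matrix.det_eval_matrixOfPolynomials_eq_det_vandermonde
    _ (fun i => descPochhammer K i) (fun i => descPochhammer_natDegree K i)
    fun i => monic_descPochhammer K i]
  congr 1
  ext i j
  simp [descPochhammer_eval_eq_descFactorial]

lemma det_iterate_derivative_X_pow (l : List ℕ) :
    (Matrix.of fun i j : Fin l.length =>
      derivative^[(i : ℕ)] ((X : K[X]) ^ degVec l j)).det = C (vanderQ l : K) * X ^ l.sum := by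
  have hentry (i n : ℕ) :
      X ^ i * derivative^[i] ((X : K[X]) ^ n) = X ^ n * C (n.descFactorial i : K) := by
    rw [iterate_derivative_X_pow_eq_C_mul]
    rcases le_or_gt i n with h | h
    · rw [mul_left_comm, ← pow_add, Nat.add_sub_cancel' h, mul_comm]
    · simp [Nat.descFactorial_of_lt h]
  have hrows := Matrix.det_mul_column (fun i : Fin l.length => (X : K[X]) ^ (i : ℕ))
    (Matrix.of fun i j : Fin l.length => derivative^[(i : ℕ)] ((X : K[X]) ^ degVec l j))
  simp only [Matrix.of_apply, hentry] at hrows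
  have hcols := Matrix.det_mul_row (fun j => (X : K[X]) ^ degVec l j)
    ((C : K →+* K[X]).mapMatrix
      (Matrix.of fun i j : Fin l.length => ((degVec l j).descFactorial i : K)))
  rw [← RingHom.map_det, det_descFactorial_degVec] at hcols
  simp only [RingHom.mapMatrix_apply, Matrix.map_apply, Matrix.of_apply] at hcols
  rw [hcols, Finset.prod_pow_eq_pow_sum, Finset.prod_pow_eq_pow_sum, sum_degVec, add_comm,
    pow_add, mul_assoc] at hrows
  rw [← mul_left_cancel₀ (pow_ne_zero _ X_ne_zero) hrows, mul_comm]

lemma HeWVar_zero {l : List ℕ} (hl : l.Pairwise (· ≥ ·)) : HeWVar (0 : K) l = X ^ l.sum := by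
  simp only [HeWVar, hermiteVar_zero_variance]
  rw [det_iterate_derivative_X_pow, ← mul_assoc, ← C_mul,
    inv_mul_cancel₀ (cast_vanderQ_ne_zero hl), C_1, one_mul]

lemma HeWVar_eq_C_mul_jacobiTrudi (v : K) (l : List ℕ) :
    HeWVar v l = C ((vanderQ l : K)⁻¹ * ∏ j, ((degVec l j).factorial : K)) *
      jacobiTrudi l (hermiteSeries v) := by
  rw [HeWVar, C_mul, mul_assoc, map_prod, jacobiTrudi, ← Matrix.det_mul_row]
  simp only [hermiteVar_eq_factorial_mul_coeff, iterate_derivative_C_mul,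
    iterate_derivative_coeff_hermiteSeries, Matrix.of_apply]

lemma HeWVar_comp_C_mul_X {c : K} (hc : c ≠ 0) (v : K) (l : List ℕ) :
    (HeWVar (c ^ 2 * v) l).comp (C c * X) = C (c ^ l.sum) * HeWVar v l := by
  rw [HeWVar_eq_C_mul_jacobiTrudi, HeWVar_eq_C_mul_jacobiTrudi, mul_comp, C_comp,
    ← coe_compRingHom_apply, ← jacobiTrudi_map, map_compRingHom_hermiteSeries,
    jacobiTrudi_rescale ((IsRegular.of_ne_zero (C_ne_zero.2 hc)).left), C_pow, mul_left_comm]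

lemma coeff_HeWVar_neg (v : K) (l : List ℕ) {j : ℕ} (hj : 2 * j ≤ l.sum) :
    (HeWVar (-v) l).coeff (l.sum - 2 * j) = (-1) ^ j * (HeWVar v l).coeff (l.sum - 2 * j) := by
  apply (algebraMap K (AlgebraicClosure K)).injective
  obtain ⟨i, hi⟩ := IsAlgClosed.exists_pow_nat_eq (-1 : AlgebraicClosure K) two_pos
  have hi0 : i ≠ 0 := by rintro rfl; simp at hi
  have hpow : i ^ l.sum = i ^ (l.sum - 2 * j) * (-1) ^ j := by
    rw [← hi, ← pow_mul, ← pow_add, Nat.sub_add_cancel hj]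
  have hcomp := congrArg (fun p => coeff p (l.sum - 2 * j))
    (HeWVar_comp_C_mul_X hi0 (algebraMap K _ v) l)
  simp only [comp_C_mul_X_coeff, coeff_C_mul, hi, neg_one_mul, hpow] at hcomp
  rw [map_mul, map_pow, map_neg, map_one, ← coeff_map, ← coeff_map, map_HeWVar, map_HeWVar, map_neg]
  apply mul_left_cancel₀ (pow_ne_zero (l.sum - 2 * j) hi0)
  rw [mul_comm, hcomp, mul_assoc]

lemma HeWVar_conjugate {l : List ℕ} (hl : l.Pairwise (· ≥ ·)) (v : K) :
    HeWVar v l = HeWVar (-v) (conjugate l) := by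
  obtain ⟨s, hs⟩ := exists_jacobiTrudi_eq_jacobiTrudi_conjugate (R := K[X]) hl
  set a : K := (vanderQ l : K)⁻¹ * ∏ j, ((degVec l j).factorial : K)
  set b : K := (vanderQ (conjugate l) : K)⁻¹ * ∏ j, ((degVec (conjugate l) j).factorial : K)
  set ε : K := s * (-1) ^ (conjugate l).sum
  have hleft (w : K) :
      HeWVar w l = C (a * ε) * jacobiTrudi (conjugate l) (hermiteSeries (-w)) := by
    rw [HeWVar_eq_C_mul_jacobiTrudi, hs _ _ (hermiteSeries_mul_rescale_neg_one w)
      (constantCoeff_hermiteSeries w), jacobiTrudi_rescale isUnit_neg_one.isRegular.left]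
    simp only [a, ε, map_mul, map_pow, map_neg, map_one, map_intCast]
    ring
  have hright (w : K) :
      HeWVar w (conjugate l) = C b * jacobiTrudi (conjugate l) (hermiteSeries w) :=
    HeWVar_eq_C_mul_jacobiTrudi w (conjugate l)
  have hconst : a * ε = b := by
    have hl0 := hleft 0
    have hr0 := hright 0
    rw [HeWVar_zero hl, neg_zero] at hl0
    rw [HeWVar_zero (pairwise_conjugate l)] at hr0
    have hprod : C b * X ^ l.sum = C (a * ε) * X ^ (conjugate l).sum := by
      rw [hl0, hr0, mul_left_comm]
    simpa using (congrArg (eval 1) hprod).symm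
  rw [hleft, hright, hconst]

theorem wronskianHermite_coeff_conjugate_general (v : K) (l : List ℕ) (hl : l.Pairwise (· ≥ ·))
    (j : ℕ) (hj : 2 * j ≤ l.sum) :
    (HeWVar v l).coeff (l.sum - 2 * j) =
      (-1 : K) ^ j * (HeWVar v (conjugate l)).coeff (l.sum - 2 * j) := by
  rw [← neg_neg v, coeff_HeWVar_neg (-v) l hj, HeWVar_conjugate hl, neg_neg]

end WronskianHermiteVar

/-- Conjugation symmetry of the coefficients of Wronskian Hermite polynomials:
`coeff_{|λ|−2j}(He_λ) = (−1)^j · coeff_{|λ|−2j}(He_{λ'})`. -/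
theorem wronskianHermite_coeff_conjugate (l : List ℕ) (hl : IsPartition l)
    (j : ℕ) (hj : 2 * j ≤ l.sum) :
    (HeW l).coeff (l.sum - 2 * j) =
      (-1 : ℚ) ^ j * (HeW (conjugate l)).coeff (l.sum - 2 * j) := by
  simpa only [HeWVar_one] using wronskianHermite_coeff_conjugate_general (1 : ℚ) l hl.1 j hj
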